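/- Let G be a continuous self-map of a compact metric space Q and let (X_n)_{n≥1} be a sequence of periodic orbits of G with strictly increasing periods π(X_n); let μ_n be the uniform atomic probability measure on X_n. Assume there are sequences of numbers (γ_n)_{n≥1} with γ_n > 0 and (κ_n)_{n≥1} with κ_n ∈ (0,1] such that: (1) for each n, the orbit X_{n+1} is a (γ_n, κ_n)-good approximation of X_n; (2) Σ_{n=1}^∞ γ_n < ∞; (3) ∏_{n=1}^∞ κ_n > 0. Then the sequence (μ_n) converges in the weak-* topology to a measure μ; the limit measure μ is ergodic and G-invariant; and supp μ = ⋂_{k=1}^∞ closure(⋃_{l=k}^∞ X_l), i.e. supp μ is the topological limit of the sequence of orbits X_n: it equals the set of points y ∈ Q for which there exist m_i → ∞ and x_i ∈ X_{m_i} with x_i → y. -/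

import Mathlib

open MeasureTheory Filter Metric Topology
open scoped ENNReal

/-- The uniform atomic probability measure on a finite set `X`:
`μ_X = (1/#X) ∑_{x ∈ X} δ_x`. -/
noncomputable def unifOrbit {Q : Type*} [MeasurableSpace Q] (X : Finset Q) :
    Measure Q := ((X.card : ℝ≥0∞))⁻¹ • ∑ x ∈ X, Measure.dirac x

/-- `X` is a periodic orbit of `G`: the orbit of a periodic point, with period `π(X) = #X`. -/
def IsPeriodicOrbit {Q : Type*} (G : Q → Q) (X : Finset Q) : Prop :=
  0 < X.card ∧ ∃ x : Q, G^[X.card] x = x ∧ (X : Set Q) = {y | ∃ i < X.card, G^[i] x = y}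

/-- `Y` is a `(γ, κ)`-good approximation of `X` (both periodic orbits of `G`):
there are `Γ ⊆ Y` and a projection `ρ : Γ → X` with
(i) `dist(G^j y, G^j ρ(y)) < γ` for all `y ∈ Γ` and `0 ≤ j < π(X)`,
(ii) `#Γ/#Y ≥ κ`, (iii) all fibers `ρ⁻¹(x)`, `x ∈ X`, have the same cardinality. -/
def GoodApprox {Q : Type*} [MetricSpace Q] (G : Q → Q) (γ κ : ℝ) (Y X : Finset Q) : Prop :=
  ∃ (Γ : Finset Q) (ρ : Q → Q),
    Γ ⊆ Y ∧ (∀ y ∈ Γ, ρ y ∈ X) ∧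
    (∀ y ∈ Γ, ∀ j < X.card, dist (G^[j] y) (G^[j] (ρ y)) < γ) ∧
    κ ≤ (Γ.card : ℝ) / (Y.card : ℝ) ∧
    ∃ c : ℕ, ∀ x ∈ X, Set.ncard {y : Q | y ∈ Γ ∧ ρ y = x} = c

/-- The support of a Borel measure: the set of points all of whose open
neighborhoods have positive measure. -/
def msupport {Q : Type*} [TopologicalSpace Q] [MeasurableSpace Q] (μ : Measure Q) : Set Q :=
  {x | ∀ U : Set Q, IsOpen U → x ∈ U → 0 < μ U}

/-!
Composing good approximations adds the errors `γ` and multiplies the proportions `κ`, so the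
hypotheses make the sequence of orbits Cauchy: for every `ε > 0` and all large `n`, each `X m` with
`m > n` is an `(ε, 1 - ε)`-good approximation of `X n`. A point of `X m` shadowing a point of `X n`
for one period has nearly the same Birkhoff average of length `#X n`, which on `X n` is the constant
`∫ f dμ_n`. Hence for Lipschitz `f` these averages are within `O(ε)` of that constant in `L¹(μ_m)`,
uniformly in `m > n`. Integrating gives the Cauchy property of `∫ f dμ_n`, hence weak convergence;
passing to the limit in `m` gives `L¹(μ)`-approximation of Birkhoff averages by constants, hence
ergodicity. Finally, equality of the fibre cardinalities gives each `ε`-ball around a point of `X n`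
mass at least `(1 - ε) / #X n` for every `μ_m`, hence for `μ`, which determines the support.
-/

open scoped NNReal BoundedContinuousFunction

theorem iInter_closure_iUnion_eq_setOf_tendsto {Q : Type*} [TopologicalSpace Q]
    [FirstCountableTopology Q] (X : ℕ → Set Q) :
    (⋂ k : ℕ, closure (⋃ l : ℕ, ⋃ (_ : k ≤ l), X l)) =
      {y : Q | ∃ (m : ℕ → ℕ) (x : ℕ → Q), Tendsto m atTop atTop ∧
        (∀ i, x i ∈ X (m i)) ∧ Tendsto x atTop (𝓝 y)} := by
  ext y
  rw [Set.mem_iInter]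
  constructor
  · intro hy
    obtain ⟨U, hU⟩ := (𝓝 y).exists_antitone_basis
    have hnear : ∀ i, ∃ m x, i ≤ m ∧ x ∈ X m ∧ x ∈ U i := fun i ↦ by
      obtain ⟨x, hxU, hx⟩ := mem_closure_iff_nhds.1 (hy i) (U i) (hU.mem i)
      simp only [Set.mem_iUnion] at hx
      obtain ⟨m, him, hxm⟩ := hx
      exact ⟨m, x, him, hxm, hxU⟩
    choose m x him hxm hxU using hnear
    exact ⟨m, x, tendsto_atTop_mono him tendsto_id, hxm, hU.tendsto hxU⟩
  · rintro ⟨m, x, hm, hxm, hx⟩ k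
    refine mem_closure_of_tendsto hx ?_
    filter_upwards [hm.eventually_ge_atTop k] with i hi
    exact Set.mem_iUnion₂.2 ⟨m i, hi, hxm i⟩

section Fibers

variable {α β : Type*} [DecidableEq β] {s : Finset α} {t : Finset β} {f : α → β} {c : ℕ}

theorem card_eq_mul_of_card_fiber_eq (hf : Set.MapsTo f s t)
    (hc : ∀ b ∈ t, {a ∈ s | f a = b}.card = c) : s.card = t.card * c := by
  rw [Finset.card_eq_sum_card_fiberwise hf, Finset.sum_const_nat hc]

theorem card_filter_mem_eq_mul_of_card_fiber_eq (hc : ∀ b ∈ t, {a ∈ s | f a = b}.card = c) :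
    {a ∈ s | f a ∈ t}.card = t.card * c := by
  refine card_eq_mul_of_card_fiber_eq (f := f) (fun a ha ↦ (Finset.mem_filter.1 ha).2)
    fun b hb ↦ ?_
  rw [← hc b hb, Finset.filter_filter]
  congr 1
  exact Finset.filter_congr fun a _ ↦ ⟨And.right, fun ha ↦ ⟨ha ▸ hb, ha⟩⟩

end Fibers

section Measures

variable {Q : Type*} [MeasurableSpace Q]

theorem isTightMeasureSet_of_forall_finite_cthickening [PseudoMetricSpace Q] [CompleteSpace Q]
    {S : Set (Measure Q)}
    (h : ∀ δ : ℝ≥0, 0 < δ → ∃ F : Set Q, F.Finite ∧ ∀ μ ∈ S, μ (cthickening δ F)ᶜ ≤ δ) :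
    IsTightMeasureSet S := by
  rw [isTightMeasureSet_iff_exists_isCompact_measure_compl_le]
  intro ε hε
  obtain ⟨δ, hδ, hδε⟩ := ENNReal.exists_pos_sum_of_countable hε.ne' ℕ
  have hδ_lim : Tendsto δ atTop (𝓝 0) :=
    NNReal.tendsto_atTop_zero_of_summable (ENNReal.tsum_coe_ne_top_iff_summable.1 hδε.ne_top)
  choose F hF hS using fun n ↦ h (δ n) (hδ n)
  refine ⟨⋂ n, cthickening (δ n) (F n), ?_, fun μ hμ ↦ ?_⟩
  · refine TotallyBounded.isCompact_of_isClosed (totallyBounded_iff.2 fun r hr ↦ ?_)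
      (isClosed_iInter fun n ↦ isClosed_cthickening)
    obtain ⟨n, hn⟩ := (hδ_lim.eventually_lt_const (Real.toNNReal_pos.2 hr)).exists
    refine ⟨F n, hF n, ?_⟩
    rw [← thickening_eq_biUnion_ball]
    exact (Set.iInter_subset _ n).trans
      (cthickening_subset_thickening' hr (Real.lt_toNNReal_iff_coe_lt.1 hn) _)
  · calc μ (⋂ n, cthickening (δ n) (F n))ᶜ
        = μ (⋃ n, (cthickening (δ n) (F n))ᶜ) := by rw [Set.compl_iInter]
      _ ≤ ∑' n, μ (cthickening (δ n) (F n))ᶜ := measure_iUnion_le _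
      _ ≤ ∑' n, (δ n : ℝ≥0∞) := ENNReal.tsum_le_tsum fun n ↦ hS n μ hμ
      _ ≤ ε := hδε.le

theorem tendsto_probabilityMeasure_of_forall_lipschitz [PseudoMetricSpace Q]
    [OpensMeasurableSpace Q] {ι : Type*} {l : Filter ι} [l.IsCountablyGenerated]
    {ν : ι → ProbabilityMeasure Q} {μ : ProbabilityMeasure Q}
    (h : ∀ (f : Q →ᵇ ℝ) (L : ℝ≥0), LipschitzWith L f →
      Tendsto (fun i ↦ ∫ x, f x ∂(ν i : Measure Q)) l (𝓝 (∫ x, f x ∂(μ : Measure Q)))) :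
    Tendsto ν l (𝓝 μ) :=
  tendsto_iff_forall_lipschitz_integral_tendsto.2 fun f hbdd ⟨L, hL⟩ ↦
    h ⟨⟨f, hL.continuous⟩, hbdd⟩ L hL

theorem exists_tendsto_of_isTightMeasureSet [MetricSpace Q] [BorelSpace Q]
    {ν : ℕ → ProbabilityMeasure Q}
    (htight : IsTightMeasureSet (Set.range fun n ↦ (ν n : Measure Q)))
    (hcauchy : ∀ (f : Q →ᵇ ℝ) (L : ℝ≥0), LipschitzWith L f →
      CauchySeq fun n ↦ ∫ x, f x ∂(ν n : Measure Q)) :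
    ∃ μ : ProbabilityMeasure Q, Tendsto ν atTop (𝓝 μ) := by
  have hcompact : IsCompact (closure (Set.range ν)) :=
    isCompact_closure_of_isTightMeasureSet (by simpa [Set.range] using htight)
  obtain ⟨μ, -, hμ⟩ := hcompact.exists_mapClusterPt (f := atTop) (u := ν)
    (tendsto_principal.2 (Eventually.of_forall fun n ↦ subset_closure ⟨n, rfl⟩))
  refine ⟨μ, tendsto_probabilityMeasure_of_forall_lipschitz fun f L hL ↦ ?_⟩
  exact le_nhds_of_cauchy_adhp (hcauchy f L hL) (hμ.continuousAt_comp
    (ProbabilityMeasure.continuous_integral_boundedContinuousFunction f).continuousAt)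

theorem measure_eq_of_forall_lipschitz_integral_eq [PseudoMetricSpace Q] [BorelSpace Q]
    {ν μ : Measure Q} [IsProbabilityMeasure ν] [IsProbabilityMeasure μ]
    (h : ∀ (f : Q →ᵇ ℝ) (L : ℝ≥0), LipschitzWith L f → ∫ x, f x ∂ν = ∫ x, f x ∂μ) :
    ν = μ := by
  let ν' : ProbabilityMeasure Q := ⟨ν, inferInstance⟩
  let μ' : ProbabilityMeasure Q := ⟨μ, inferInstance⟩
  have hlim : Tendsto (fun _ : ℕ ↦ ν') atTop (𝓝 μ') :=
    tendsto_probabilityMeasure_of_forall_lipschitz fun f L hL ↦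
      (h f L hL).symm ▸ tendsto_const_nhds
  exact congrArg ProbabilityMeasure.toMeasure (tendsto_nhds_unique tendsto_const_nhds hlim)

theorem measurePreserving_of_tendsto [TopologicalSpace Q] [BorelSpace Q] [HasOuterApproxClosed Q]
    {ι : Type*} {l : Filter ι} [l.NeBot] {G : Q → Q} (hG : Continuous G)
    {ν : ι → ProbabilityMeasure Q} (hν : ∀ i, MeasurePreserving G (ν i : Measure Q) (ν i))
    {μ : ProbabilityMeasure Q} (hμ : Tendsto ν l (𝓝 μ)) :
    MeasurePreserving G (μ : Measure Q) μ := by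
  have hmap : ∀ i, (ν i).map hG.measurable.aemeasurable = ν i := fun i ↦
    Subtype.ext (hν i).map_eq
  have hlim := ProbabilityMeasure.tendsto_map_of_tendsto_of_continuous ν μ hμ hG
  simp only [hmap] at hlim
  exact ⟨hG.measurable, congrArg ProbabilityMeasure.toMeasure (tendsto_nhds_unique hlim hμ)⟩

theorem msupport_subset_closure_of_tendsto [TopologicalSpace Q] [OpensMeasurableSpace Q]
    [HasOuterApproxClosed Q] {ι : Type*} {l : Filter ι} [l.NeBot]
    {ν : ι → ProbabilityMeasure Q} {μ : ProbabilityMeasure Q} (hμ : Tendsto ν l (𝓝 μ))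
    {A : Set Q} (hA : ∀ᶠ i in l, ∀ᵐ x ∂(ν i : Measure Q), x ∈ A) :
    msupport (μ : Measure Q) ⊆ closure A := by
  by_contra! hsub
  obtain ⟨y, hy, hyA⟩ := Set.not_subset.1 hsub
  have hopen : IsOpen (closure A)ᶜ := isClosed_closure.isOpen_compl
  refine (hy _ hopen hyA).not_ge ?_
  calc (μ : Measure Q) (closure A)ᶜ
      ≤ l.liminf fun i ↦ (ν i : Measure Q) (closure A)ᶜ :=
        ProbabilityMeasure.le_liminf_measure_open_of_tendsto hμ hopen
    _ = l.liminf fun _ ↦ (0 : ℝ≥0∞) := by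
        refine liminf_congr ?_
        filter_upwards [hA] with i hi
        exact measure_mono_null (Set.compl_subset_compl.2 subset_closure) (ae_iff.1 hi)
    _ = 0 := liminf_const 0

theorem le_measureReal_of_tendsto_of_isClosed [TopologicalSpace Q] [OpensMeasurableSpace Q]
    [HasOuterApproxClosed Q] {ι : Type*} {l : Filter ι}
    {ν : ι → ProbabilityMeasure Q} {μ : ProbabilityMeasure Q} (hμ : Tendsto ν l (𝓝 μ))
    {F : Set Q} (hF : IsClosed F) {c : ℝ} (hc : ∃ᶠ i in l, c ≤ (ν i : Measure Q).real F) :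
    c ≤ (μ : Measure Q).real F := by
  refine (ENNReal.ofReal_le_iff_le_toReal (measure_ne_top _ _)).1 ?_
  calc ENNReal.ofReal c ≤ l.limsup fun i ↦ (ν i : Measure Q) F :=
        le_limsup_of_frequently_le
          (hc.mono fun i hi ↦ (ENNReal.ofReal_le_iff_le_toReal (measure_ne_top _ _)).2 hi)
    _ ≤ (μ : Measure Q) F := ProbabilityMeasure.limsup_measure_closed_le_of_tendsto hμ hF

end Measures

section BirkhoffAverages

variable {Q : Type*} {G : Q → Q}

theorem birkhoffAverage_iterate_of_isPeriodicPt {n : ℕ} {x : Q}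
    (hx : Function.IsPeriodicPt G n x) (f : Q → ℝ) (i : ℕ) :
    birkhoffAverage ℝ G f n (G^[i] x) = birkhoffAverage ℝ G f n x := by
  induction i with
  | zero => rfl
  | succ i ih =>
    rw [Function.iterate_succ_apply', ← ih, ← sub_eq_zero,
      birkhoffAverage_apply_sub_birkhoffAverage, hx.apply_iterate i, sub_self, smul_zero]

theorem dist_birkhoffAverage_le_of_forall_dist_le {f : Q → ℝ} {n : ℕ} {x y : Q} {C : ℝ}
    (hC : 0 ≤ C) (h : ∀ j < n, dist (f (G^[j] x)) (f (G^[j] y)) ≤ C) :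
    dist (birkhoffAverage ℝ G f n x) (birkhoffAverage ℝ G f n y) ≤ C := by
  refine (dist_birkhoffAverage_birkhoffAverage_le ℝ G f n x y).trans
    (div_le_of_le_mul₀ n.cast_nonneg hC ?_)
  rw [mul_comm, ← nsmul_eq_mul]
  exact (Finset.sum_le_card_nsmul _ _ C fun j hj ↦ h j (Finset.mem_range.1 hj)).trans_eq
    (by rw [Finset.card_range])

theorem exists_boundedContinuousFunction_eq_birkhoffAverage [TopologicalSpace Q]
    (hG : Continuous G) (f : Q →ᵇ ℝ) (n : ℕ) : ∃ g : Q →ᵇ ℝ, ⇑g = birkhoffAverage ℝ G f n :=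
  ⟨(n : ℝ)⁻¹ • ∑ j ∈ Finset.range n, f.compContinuous ⟨G^[j], hG.iterate j⟩, by
    ext x; simp [birkhoffAverage, birkhoffSum]⟩

variable [MeasurableSpace Q] {ν : Measure Q}

theorem integrable_birkhoffAverage (hν : MeasurePreserving G ν ν) {f : Q → ℝ}
    (hf : Integrable f ν) (n : ℕ) : Integrable (birkhoffAverage ℝ G f n) ν :=
  (integrable_finsetSum _ fun j _ ↦ (hν.iterate j).integrable_comp_of_integrable hf).const_mul _

theorem integral_birkhoffAverage (hν : MeasurePreserving G ν ν) {f : Q → ℝ}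
    (hf : Integrable f ν) {n : ℕ} (hn : n ≠ 0) :
    ∫ x, birkhoffAverage ℝ G f n x ∂ν = ∫ x, f x ∂ν := by
  have hint : ∀ j ∈ Finset.range n, Integrable (fun x ↦ f (G^[j] x)) ν := fun j _ ↦
    (hν.iterate j).integrable_comp_of_integrable hf
  have hiter : ∀ j, ∫ x, f (G^[j] x) ∂ν = ∫ x, f x ∂ν := fun j ↦ by
    have hj := hν.iterate j
    rw [← integral_map hj.aemeasurable (hj.map_eq.symm ▸ hf.aestronglyMeasurable), hj.map_eq]
  simp only [birkhoffAverage, birkhoffSum, smul_eq_mul]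
  rw [integral_const_mul, integral_finsetSum _ hint]
  simp only [hiter, Finset.sum_const, Finset.card_range, nsmul_eq_mul]
  exact inv_mul_cancel_left₀ (Nat.cast_ne_zero.2 hn) _

theorem abs_integral_sub_le_integral_abs_birkhoffAverage_sub [IsProbabilityMeasure ν]
    (hν : MeasurePreserving G ν ν) {f : Q → ℝ} (hf : Integrable f ν) {n : ℕ} (hn : n ≠ 0) (c : ℝ) :
    |∫ x, f x ∂ν - c| ≤ ∫ x, |birkhoffAverage ℝ G f n x - c| ∂ν := by
  have hsub : ∫ x, f x ∂ν - c = ∫ x, (birkhoffAverage ℝ G f n x - c) ∂ν := by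
    rw [integral_sub (integrable_birkhoffAverage hν hf n) (integrable_const c),
      integral_birkhoffAverage hν hf hn, integral_const, probReal_univ, one_smul]
  rw [hsub]
  exact abs_integral_le_integral_abs

/-- Any invariant component `ν₁` of `μ` is dominated by a multiple of `μ`, so the Birkhoff averages
are close to the same constants in `L¹(ν₁)`; hence `ν₁` and `μ` have the same integrals and `μ` is
extremal. -/
theorem ergodic_of_forall_lipschitz_birkhoffAverage [PseudoMetricSpace Q] [BorelSpace Q]
    {μ : Measure Q} [IsProbabilityMeasure μ] (hμ : MeasurePreserving G μ μ)
    (h : ∀ (f : Q →ᵇ ℝ) (L : ℝ≥0), LipschitzWith L f → ∀ ε > 0, ∃ n ≠ 0, ∃ c : ℝ,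
      ∫ x, |birkhoffAverage ℝ G f n x - c| ∂μ ≤ ε) :
    Ergodic G μ := by
  refine Ergodic.of_mem_extremePoints (mem_extremePoints_iff_left.2 ⟨⟨hμ, inferInstance⟩, ?_⟩)
  rintro ν₁ ⟨hν₁, _⟩ ν₂ ⟨-, -⟩ ⟨a, b, ha, -, hab, rfl⟩
  have ha_top : a ≠ ∞ := ne_top_of_le_ne_top ENNReal.one_ne_top (hab ▸ le_self_add)
  have ha_pos : 0 < a.toReal := ENNReal.toReal_pos ha.ne' ha_top
  set μ := a • ν₁ + b • ν₂
  refine measure_eq_of_forall_lipschitz_integral_eq fun f L hL ↦ eq_of_forall_dist_le fun ε hε ↦ ?_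
  obtain ⟨n, hn, c, hc⟩ := h f L hL (ε / (a.toReal⁻¹ + 1)) (by positivity)
  have hint : Integrable (fun x ↦ |birkhoffAverage ℝ G f n x - c|) μ :=
    ((integrable_birkhoffAverage hμ (f.integrable μ) n).sub (integrable_const c)).abs
  have hdom : a.toReal * ∫ x, |birkhoffAverage ℝ G f n x - c| ∂ν₁ ≤
      ∫ x, |birkhoffAverage ℝ G f n x - c| ∂μ := by
    rw [← smul_eq_mul, ← integral_smul_measure]
    exact integral_mono_measure (Measure.le_add_right le_rfl) (ae_of_all _ fun _ ↦ abs_nonneg _)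
      hint
  calc dist (∫ x, f x ∂ν₁) (∫ x, f x ∂μ)
      ≤ |∫ x, f x ∂ν₁ - c| + |∫ x, f x ∂μ - c| := by
        rw [← Real.dist_eq, ← Real.dist_eq]
        exact dist_triangle_right _ _ c
    _ ≤ ∫ x, |birkhoffAverage ℝ G f n x - c| ∂ν₁ + ∫ x, |birkhoffAverage ℝ G f n x - c| ∂μ :=
        add_le_add
          (abs_integral_sub_le_integral_abs_birkhoffAverage_sub hν₁ (f.integrable ν₁) hn c)
          (abs_integral_sub_le_integral_abs_birkhoffAverage_sub hμ (f.integrable μ) hn c)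
    _ ≤ (a.toReal⁻¹ + 1) * ∫ x, |birkhoffAverage ℝ G f n x - c| ∂μ := by
        rw [add_mul, one_mul]
        gcongr
        exact (le_inv_mul_iff₀ ha_pos).2 hdom
    _ ≤ ε := (le_div_iff₀' (by positivity)).1 hc

end BirkhoffAverages

section UnifOrbit

variable {Q : Type*} [MeasurableSpace Q] {X : Finset Q}

theorem isProbabilityMeasure_unifOrbit (hX : X.Nonempty) : IsProbabilityMeasure (unifOrbit X) :=
  ⟨by simpa [unifOrbit] using ENNReal.inv_mul_cancel (by simpa using hX.ne_empty) (by simp)⟩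

variable [MeasurableSingletonClass Q]

theorem ae_mem_unifOrbit (X : Finset Q) : ∀ᵐ x ∂(unifOrbit X), x ∈ X := by
  simp only [unifOrbit, ae_iff, Measure.smul_apply, Measure.finsetSum_apply, smul_eq_mul]
  rw [Finset.sum_eq_zero fun x hx ↦ by simp [hx], mul_zero]

theorem integrable_unifOrbit (hX : X.Nonempty) (f : Q → ℝ) : Integrable f (unifOrbit X) :=
  (integrable_finsetSum_measure.2 fun _ _ ↦ integrable_dirac (by simp)).smul_measure
    (by simpa using hX.ne_empty)

theorem integral_unifOrbit (X : Finset Q) (f : Q → ℝ) :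
    ∫ x, f x ∂(unifOrbit X) = (X.card : ℝ)⁻¹ * ∑ x ∈ X, f x := by
  rw [unifOrbit, integral_smul_measure,
    integral_finsetSum_measure fun _ _ ↦ integrable_dirac (by simp)]
  simp

theorem card_div_card_le_measureReal_unifOrbit (hX : X.Nonempty) {T : Finset Q} (hTX : T ⊆ X)
    {s : Set Q} (hTs : (T : Set Q) ⊆ s) : (T.card : ℝ) / X.card ≤ (unifOrbit X).real s := by
  have := isProbabilityMeasure_unifOrbit hX
  classical
  calc (T.card : ℝ) / X.card = (X.card : ℝ)⁻¹ * ∑ x ∈ X, (T : Set Q).indicator 1 x := by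
        simp [Set.indicator_apply, Finset.inter_eq_right.2 hTX, div_eq_inv_mul]
    _ = (unifOrbit X).real T := by
        rw [← integral_unifOrbit, integral_indicator_one T.measurableSet]
    _ ≤ (unifOrbit X).real s := measureReal_mono hTs

end UnifOrbit

namespace IsPeriodicOrbit

variable {Q : Type*} {G : Q → Q} {X : Finset Q}

theorem nonempty (hX : IsPeriodicOrbit G X) : X.Nonempty := Finset.card_pos.1 hX.1

theorem isPeriodicPt (hX : IsPeriodicOrbit G X) {x : Q} (hx : x ∈ X) :
    Function.IsPeriodicPt G X.card x := by
  obtain ⟨-, x₀, hx₀, hXx₀⟩ := hX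
  obtain ⟨i, -, rfl⟩ : x ∈ {y | ∃ i < X.card, G^[i] x₀ = y} := hXx₀ ▸ hx
  exact Function.IsPeriodicPt.apply_iterate hx₀ i

theorem exists_iterate_eq (hX : IsPeriodicOrbit G X) :
    ∃ x₀, ∀ x, x ∈ X ↔ ∃ i, G^[i] x₀ = x := by
  obtain ⟨hpos, x₀, hx₀, hXx₀⟩ := hX
  refine ⟨x₀, fun x ↦ ?_⟩
  rw [← Finset.mem_coe, hXx₀]
  refine ⟨fun ⟨i, _, hi⟩ ↦ ⟨i, hi⟩, fun ⟨i, hi⟩ ↦ ⟨i % X.card, Nat.mod_lt _ hpos, ?_⟩⟩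
  rw [← hi]
  exact Function.IsPeriodicPt.iterate_mod_apply hx₀ i

theorem mapsTo (hX : IsPeriodicOrbit G X) : Set.MapsTo G X X := fun x hx ↦ by
  obtain ⟨x₀, hx₀⟩ := hX.exists_iterate_eq
  obtain ⟨i, rfl⟩ := (hx₀ x).1 hx
  exact (hx₀ _).2 ⟨i + 1, Function.iterate_succ_apply' G i x₀⟩

theorem sum_comp {M : Type*} [AddCommMonoid M] (hX : IsPeriodicOrbit G X) (f : Q → M) :
    ∑ x ∈ X, f (G x) = ∑ x ∈ X, f x := by
  have hinj : Set.InjOn G X :=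
    (Function.bijOn_ptsOfPeriod G hX.1).injOn.mono fun _ ↦ hX.isPeriodicPt
  exact Finset.sum_nbij G hX.mapsTo hinj (Finset.surjOn_of_injOn_of_card_le _ hX.mapsTo hinj le_rfl)
    fun _ _ ↦ rfl

theorem birkhoffAverage_eq (hX : IsPeriodicOrbit G X) (f : Q → ℝ) {x y : Q} (hx : x ∈ X)
    (hy : y ∈ X) : birkhoffAverage ℝ G f X.card x = birkhoffAverage ℝ G f X.card y := by
  obtain ⟨x₀, hx₀⟩ := hX.exists_iterate_eq
  have hper := hX.isPeriodicPt ((hx₀ x₀).2 ⟨0, rfl⟩)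
  obtain ⟨i, rfl⟩ := (hx₀ x).1 hx
  obtain ⟨j, rfl⟩ := (hx₀ y).1 hy
  simp only [birkhoffAverage_iterate_of_isPeriodicPt hper]

variable [MeasurableSpace Q]

theorem measurePreserving (hX : IsPeriodicOrbit G X) (hG : Measurable G) :
    MeasurePreserving G (unifOrbit X) (unifOrbit X) := by
  refine ⟨hG, ?_⟩
  rw [unifOrbit, Measure.map_smul, ← Measure.mapₗ_apply_of_measurable hG, map_sum]
  simp only [Measure.mapₗ_apply_of_measurable hG, Measure.map_dirac' hG]
  rw [hX.sum_comp Measure.dirac]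

variable [MeasurableSingletonClass Q]

theorem birkhoffAverage_eq_integral (hX : IsPeriodicOrbit G X) (hG : Measurable G) (f : Q → ℝ)
    {x : Q} (hx : x ∈ X) : birkhoffAverage ℝ G f X.card x = ∫ y, f y ∂(unifOrbit X) := by
  have := isProbabilityMeasure_unifOrbit hX.nonempty
  calc birkhoffAverage ℝ G f X.card x
      = ∫ _, birkhoffAverage ℝ G f X.card x ∂(unifOrbit X) := by simp
    _ = ∫ y, birkhoffAverage ℝ G f X.card y ∂(unifOrbit X) := by
        refine integral_congr_ae ?_
        filter_upwards [ae_mem_unifOrbit X] with y hy using hX.birkhoffAverage_eq f hx hy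
    _ = ∫ y, f y ∂(unifOrbit X) :=
        integral_birkhoffAverage (hX.measurePreserving hG) (integrable_unifOrbit hX.nonempty f)
          hX.1.ne'

end IsPeriodicOrbit

namespace GoodApprox

variable {Q : Type*} [MetricSpace Q] {G : Q → Q} {γ γ' κ κ' : ℝ} {X Y Z : Finset Q}

theorem exists_card_fiber [DecidableEq Q] (h : GoodApprox G γ κ Y X) :
    ∃ (Γ : Finset Q) (ρ : Q → Q) (c : ℕ), Γ ⊆ Y ∧ Set.MapsTo ρ Γ X ∧
      (∀ y ∈ Γ, ∀ j < X.card, dist (G^[j] y) (G^[j] (ρ y)) < γ) ∧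
      κ ≤ (Γ.card : ℝ) / Y.card ∧ ∀ x ∈ X, {y ∈ Γ | ρ y = x}.card = c := by
  obtain ⟨Γ, ρ, hΓ, hρ, hdist, hκ, c, hc⟩ := h
  refine ⟨Γ, ρ, c, hΓ, hρ, hdist, hκ, fun x hx ↦ ?_⟩
  rw [← hc x hx, ← Set.ncard_coe_finset, Finset.coe_filter]

theorem mono (h : GoodApprox G γ κ Y X) (hγ : γ ≤ γ') (hκ : κ' ≤ κ) : GoodApprox G γ' κ' Y X := by
  obtain ⟨Γ, ρ, hΓ, hρ, hdist, hκΓ, hc⟩ := h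
  exact ⟨Γ, ρ, hΓ, hρ, fun y hy j hj ↦ (hdist y hy j hj).trans_le hγ, hκ.trans hκΓ, hc⟩

theorem card_le (h : GoodApprox G γ κ Y X) (hκ : 0 < κ) : X.card ≤ Y.card := by
  classical
  obtain ⟨Γ, ρ, c, hΓ, hρ, -, hκΓ, hc⟩ := h.exists_card_fiber
  have hΓX : Γ.card = X.card * c := card_eq_mul_of_card_fiber_eq hρ hc
  have hc_pos : 0 < c := Nat.pos_of_ne_zero fun hc₀ ↦
    hκ.not_ge (by simpa [hΓX, hc₀] using hκΓ)
  calc X.card ≤ X.card * c := Nat.le_mul_of_pos_right _ hc_pos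
    _ = Γ.card := hΓX.symm
    _ ≤ Y.card := Finset.card_le_card hΓ

theorem trans (hXY : GoodApprox G γ κ Y X) (hYZ : GoodApprox G γ' κ' Z Y) (hκ : 0 < κ)
    (hκ' : 0 ≤ κ') : GoodApprox G (γ + γ') (κ * κ') Z X := by
  classical
  have hXY_card := hXY.card_le hκ
  obtain ⟨Γ, ρ, c, hΓ, hρ, hdist, hκΓ, hc⟩ := hXY.exists_card_fiber
  obtain ⟨Γ', ρ', c', hΓ', hρ', hdist', hκΓ', hc'⟩ := hYZ.exists_card_fiber
  have hfiber : ∀ s ⊆ Y, {z ∈ Γ' | ρ' z ∈ s}.card = s.card * c' := fun s hs ↦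
    card_filter_mem_eq_mul_of_card_fiber_eq fun y hy ↦ hc' y (hs hy)
  refine ⟨{z ∈ Γ' | ρ' z ∈ Γ}, ρ ∘ ρ', (Finset.filter_subset _ _).trans hΓ',
    fun z hz ↦ hρ (Finset.mem_filter.1 hz).2, fun z hz j hj ↦ ?_, ?_, c * c', fun x hx ↦ ?_⟩
  · obtain ⟨hz', hz⟩ := Finset.mem_filter.1 hz
    calc dist (G^[j] z) (G^[j] (ρ (ρ' z)))
        ≤ dist (G^[j] (ρ' z)) (G^[j] (ρ (ρ' z))) + dist (G^[j] z) (G^[j] (ρ' z)) := by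
          rw [add_comm]; exact dist_triangle _ _ _
      _ < γ + γ' := add_lt_add (hdist _ hz j hj) (hdist' z hz' j (hj.trans_le hXY_card))
  · have hΓ'Y : Γ'.card = Y.card * c' := card_eq_mul_of_card_fiber_eq hρ' hc'
    rcases Y.eq_empty_or_nonempty with rfl | hY
    · exact (hκ.not_ge (by simpa using hκΓ)).elim
    calc κ * κ' ≤ (Γ.card / Y.card : ℝ) * (Γ'.card / Z.card) := by gcongr
      _ = ({z ∈ Γ' | ρ' z ∈ Γ}.card : ℝ) / Z.card := by
          rw [hfiber Γ hΓ, hΓ'Y]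
          have : (Y.card : ℝ) ≠ 0 := by simpa using hY.ne_empty
          push_cast
          field_simp
  · rw [← hc x hx, ← hfiber {y ∈ Γ | ρ y = x} ((Finset.filter_subset _ _).trans hΓ),
      ← Set.ncard_coe_finset]
    congr 1
    ext z
    simp [and_assoc]

theorem chain {X : ℕ → Finset Q} {γ κ : ℕ → ℝ} (hκ : ∀ n, 0 < κ n)
    (h : ∀ n, GoodApprox G (γ n) (κ n) (X (n + 1)) (X n)) {n m : ℕ} (hnm : n < m) :
    GoodApprox G (∑ k ∈ Finset.Ico n m, γ k) (∏ k ∈ Finset.Ico n m, κ k) (X m) (X n) := by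
  induction m, hnm using Nat.le_induction with
  | base => simpa using h n
  | succ m hnm ih =>
    rw [Finset.sum_Ico_succ_top (Nat.le_of_succ_le hnm), Finset.prod_Ico_succ_top
      (Nat.le_of_succ_le hnm)]
    exact ih.trans (h m) (Finset.prod_pos fun k _ ↦ hκ k) (hκ m).le

variable [MeasurableSpace Q] [MeasurableSingletonClass Q]

theorem div_card_le_measureReal_ball (h : GoodApprox G γ κ Y X) (hY : Y.Nonempty) {x : Q}
    (hx : x ∈ X) : κ / X.card ≤ (unifOrbit Y).real (ball x γ) := by
  classical
  obtain ⟨Γ, ρ, c, hΓ, hρ, hdist, hκΓ, hc⟩ := h.exists_card_fiber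
  have hX : 0 < X.card := Finset.card_pos.2 ⟨x, hx⟩
  have hΓX : Γ.card = X.card * c := card_eq_mul_of_card_fiber_eq hρ hc
  calc κ / X.card ≤ Γ.card / Y.card / X.card := by gcongr
    _ = ({y ∈ Γ | ρ y = x}.card : ℝ) / Y.card := by
        rw [hc x hx, hΓX]
        push_cast
        field_simp
    _ ≤ (unifOrbit Y).real (ball x γ) :=
        card_div_card_le_measureReal_unifOrbit hY ((Finset.filter_subset _ _).trans hΓ)
          fun y hy ↦ by
            obtain ⟨hyΓ, rfl⟩ := Finset.mem_filter.1 hy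
            exact hdist y hyΓ 0 hX

theorem le_measureReal_thickening (h : GoodApprox G γ κ Y X) (hX : X.Nonempty)
    (hY : Y.Nonempty) : κ ≤ (unifOrbit Y).real (thickening γ X) := by
  obtain ⟨Γ, ρ, hΓ, hρ, hdist, hκΓ, -⟩ := h
  refine hκΓ.trans (card_div_card_le_measureReal_unifOrbit hY hΓ fun y hy ↦ ?_)
  exact mem_thickening_iff.2 ⟨ρ y, hρ y hy, hdist y hy 0 hX.card_pos⟩

theorem integral_abs_birkhoffAverage_sub_le (h : GoodApprox G γ κ Y X) (hγ : 0 ≤ γ)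
    (hX : IsPeriodicOrbit G X) (hY : Y.Nonempty) (hG : Measurable G) {f : Q →ᵇ ℝ} {L : ℝ≥0}
    (hf : LipschitzWith L f) :
    ∫ y, |birkhoffAverage ℝ G f X.card y - ∫ x, f x ∂(unifOrbit X)| ∂(unifOrbit Y) ≤
      L * γ + 2 * ‖f‖ * (1 - κ) := by
  obtain ⟨Γ, ρ, hΓ, hρ, hdist, hκΓ, -⟩ := h
  set F : Q → ℝ := fun y ↦ |birkhoffAverage ℝ G f X.card y - ∫ x, f x ∂(unifOrbit X)|
  have hF {C : ℝ} (hC : 0 ≤ C) {x y : Q} (hx : x ∈ X)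
      (hxy : ∀ j < X.card, dist (f (G^[j] y)) (f (G^[j] x)) ≤ C) : F y ≤ C := by
    change |_ - _| ≤ C
    rw [← hX.birkhoffAverage_eq_integral hG f hx, ← Real.dist_eq]
    exact dist_birkhoffAverage_le_of_forall_dist_le hC hxy
  have hFΓ : ∀ y ∈ Γ, F y ≤ L * γ := fun y hy ↦
    hF (by positivity) (hρ y hy) fun j hj ↦ hf.dist_le_mul_of_le (hdist y hy j hj).le
  have hFY : ∀ y, F y ≤ 2 * ‖f‖ := fun y ↦
    hF (by positivity) hX.nonempty.choose_spec fun j _ ↦ f.dist_le_two_norm _ _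
  have hY_pos : (0 : ℝ) < Y.card := Nat.cast_pos.2 hY.card_pos
  classical
  calc ∫ y, F y ∂(unifOrbit Y)
      = (∑ y ∈ Γ, F y + ∑ y ∈ Y \ Γ, F y) / Y.card := by
        rw [integral_unifOrbit, add_comm, Finset.sum_sdiff hΓ, div_eq_inv_mul]
    _ ≤ (Γ.card * (L * γ) + (Y \ Γ).card * (2 * ‖f‖)) / Y.card := by
        rw [← nsmul_eq_mul, ← nsmul_eq_mul]
        gcongr
        · exact Finset.sum_le_card_nsmul _ _ _ hFΓ
        · exact Finset.sum_le_card_nsmul _ _ _ fun y _ ↦ hFY y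
    _ = Γ.card / Y.card * (L * γ) + 2 * ‖f‖ * (1 - Γ.card / Y.card) := by
        rw [Finset.cast_card_sdiff hΓ]
        field_simp
    _ ≤ 1 * (L * γ) + 2 * ‖f‖ * (1 - κ) := by
        gcongr
        exact div_le_one_of_le₀ (by exact_mod_cast Finset.card_le_card hΓ) hY_pos.le
    _ = L * γ + 2 * ‖f‖ * (1 - κ) := by rw [one_mul]

end GoodApprox

/-- The uniform measure on a periodic orbit as a point of the space of probability measures. -/
noncomputable def IsPeriodicOrbit.probabilityMeasure {Q : Type*} [MeasurableSpace Q] {G : Q → Q}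
    {X : Finset Q} (hX : IsPeriodicOrbit G X) : ProbabilityMeasure Q :=
  ⟨unifOrbit X, isProbabilityMeasure_unifOrbit hX.nonempty⟩

/-- The Cauchy property of a sequence of orbits with respect to good approximation: for every
`ε > 0`, all sufficiently late orbits are `(ε, 1 - ε)`-good approximated by every later one. -/
def IsApproxCauchy {Q : Type*} [MetricSpace Q] (G : Q → Q) (X : ℕ → Finset Q) : Prop :=
  ∀ ε > 0, ∀ᶠ n in atTop, ∀ m > n, GoodApprox G ε (1 - ε) (X m) (X n)

theorem isApproxCauchy_of_summable {Q : Type*} [MetricSpace Q] {G : Q → Q} {X : ℕ → Finset Q}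
    {γ κ : ℕ → ℝ} (hκ : ∀ n, 0 < κ n) (h : ∀ n, GoodApprox G (γ n) (κ n) (X (n + 1)) (X n))
    (hγ : Summable γ) {P : ℝ} (hP : 0 < P)
    (hprod : Tendsto (fun n ↦ ∏ k ∈ Finset.range n, κ k) atTop (𝓝 P)) : IsApproxCauchy G X := by
  intro ε hε
  set s : ℕ → ℝ := fun n ↦ ∑ k ∈ Finset.range n, γ k
  set p : ℕ → ℝ := fun n ↦ ∏ k ∈ Finset.range n, κ k
  have hs_lim : Tendsto (fun q : ℕ × ℕ ↦ s q.2 - s q.1) (atTop ×ˢ atTop) (𝓝 0) := by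
    have hs := hγ.hasSum.tendsto_sum_nat
    simpa using (hs.comp tendsto_snd).sub (hs.comp tendsto_fst)
  have hp_lim : Tendsto (fun q : ℕ × ℕ ↦ p q.2 / p q.1) (atTop ×ˢ atTop) (𝓝 1) := by
    rw [← div_self hP.ne']
    exact (hprod.comp tendsto_snd).div (hprod.comp tendsto_fst) hP.ne'
  have hclose := (hs_lim.eventually_le_const hε).and
    (hp_lim.eventually_const_le (sub_lt_self 1 hε))
  rw [prod_atTop_atTop_eq, eventually_atTop_prod_self] at hclose
  obtain ⟨N, hN⟩ := hclose
  filter_upwards [eventually_ge_atTop N] with n hn m hnm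
  obtain ⟨hs_le, hp_le⟩ : s m - s n ≤ ε ∧ 1 - ε ≤ p m / p n := hN n m hn (hn.trans hnm.le)
  refine (GoodApprox.chain hκ h hnm).mono ?_ ?_
  · rwa [Finset.sum_Ico_eq_sub _ hnm.le]
  · have hp_pos : 0 < p n := Finset.prod_pos fun k _ ↦ hκ k
    have hp_mul : p n * ∏ k ∈ Finset.Ico n m, κ k = p m := Finset.prod_range_mul_prod_Ico _ hnm.le
    rwa [← hp_mul, mul_div_cancel_left₀ _ hp_pos.ne'] at hp_le

namespace IsApproxCauchy

variable {Q : Type*} [MetricSpace Q] [MeasurableSpace Q] {G : Q → Q} {X : ℕ → Finset Q}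

section OpensMeasurableSpace

variable [OpensMeasurableSpace Q]

theorem isTightMeasureSet [CompleteSpace Q] (h : IsApproxCauchy G X)
    (hX : ∀ n, (X n).Nonempty) : IsTightMeasureSet (Set.range fun n ↦ unifOrbit (X n)) := by
  refine isTightMeasureSet_of_forall_finite_cthickening fun δ hδ ↦ ?_
  obtain ⟨n, hn⟩ := (h δ hδ).exists
  set F : Set Q := ⋃ l ∈ Set.Iic n, (X l : Set Q)
  have hF : ∀ l ≤ n, (X l : Set Q) ⊆ F := fun l hl ↦
    Set.subset_biUnion_of_mem (u := fun l ↦ (X l : Set Q)) hl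
  refine ⟨F, (Set.finite_Iic n).biUnion fun l _ ↦ (X l).finite_toSet, ?_⟩
  rintro _ ⟨m, rfl⟩
  have := isProbabilityMeasure_unifOrbit (hX m)
  rcases le_or_gt m n with hm | hm
  · have hnull : unifOrbit (X m) (X m : Set Q)ᶜ = 0 := ae_iff.1 (ae_mem_unifOrbit (X m))
    exact (measure_mono_null (Set.compl_subset_compl.2
      ((hF m hm).trans (self_subset_cthickening _))) hnull).trans_le zero_le
  · have hmass : 1 - δ ≤ (unifOrbit (X m)).real (cthickening δ (X n : Set Q)) :=
      ((hn m hm).le_measureReal_thickening (hX n) (hX m)).trans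
        (measureReal_mono (thickening_subset_cthickening _ _))
    calc unifOrbit (X m) (cthickening δ F)ᶜ
        ≤ unifOrbit (X m) (cthickening δ (X n : Set Q))ᶜ :=
          measure_mono (Set.compl_subset_compl.2 (cthickening_subset_of_subset _ (hF n le_rfl)))
      _ ≤ δ := by
          rw [← ENNReal.ofReal_coe_nnreal]
          refine (ENNReal.le_ofReal_iff_toReal_le (measure_ne_top _ _) δ.coe_nonneg).2 ?_
          rw [← measureReal_def, probReal_compl_eq_one_sub isClosed_cthickening.measurableSet]
          linarith

theorem eventually_integral_abs_birkhoffAverage_sub_le (h : IsApproxCauchy G X)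
    (hX : ∀ n, IsPeriodicOrbit G (X n)) (hG : Measurable G) {f : Q →ᵇ ℝ} {L : ℝ≥0}
    (hf : LipschitzWith L f) {ε : ℝ} (hε : 0 < ε) :
    ∀ᶠ n in atTop, ∀ m > n,
      ∫ y, |birkhoffAverage ℝ G f (X n).card y - ∫ x, f x ∂(unifOrbit (X n))|
        ∂(unifOrbit (X m)) ≤ ε := by
  set δ : ℝ := ε / (L + 2 * ‖f‖ + 1)
  have hδ : 0 < δ := by positivity
  filter_upwards [h δ hδ] with n hn m hm
  calc ∫ y, |birkhoffAverage ℝ G f (X n).card y - ∫ x, f x ∂(unifOrbit (X n))| ∂(unifOrbit (X m))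
      ≤ L * δ + 2 * ‖f‖ * (1 - (1 - δ)) :=
        (hn m hm).integral_abs_birkhoffAverage_sub_le hδ.le (hX n) (hX m).nonempty hG hf
    _ ≤ (L + 2 * ‖f‖ + 1) * δ := by linarith
    _ = ε := mul_div_cancel₀ _ (by positivity)

theorem cauchySeq_integral (h : IsApproxCauchy G X) (hX : ∀ n, IsPeriodicOrbit G (X n))
    (hG : Measurable G) {f : Q →ᵇ ℝ} {L : ℝ≥0} (hf : LipschitzWith L f) :
    CauchySeq fun n ↦ ∫ x, f x ∂(unifOrbit (X n)) := by
  refine Metric.cauchySeq_iff'.2 fun ε hε ↦ ?_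
  obtain ⟨n, hn⟩ :=
    (h.eventually_integral_abs_birkhoffAverage_sub_le hX hG hf (half_pos hε)).exists
  refine ⟨n, fun m hm ↦ ?_⟩
  rcases hm.eq_or_lt with rfl | hnm
  · rwa [dist_self]
  have := isProbabilityMeasure_unifOrbit (hX m).nonempty
  exact ((abs_integral_sub_le_integral_abs_birkhoffAverage_sub ((hX m).measurePreserving hG)
    (f.integrable _) (hX n).1.ne' _).trans (hn m hnm)).trans_lt (half_lt_self hε)

theorem mem_msupport_of_tendsto (h : IsApproxCauchy G X) {hX : ∀ n, IsPeriodicOrbit G (X n)}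
    {μ : ProbabilityMeasure Q} (hμ : Tendsto (fun n ↦ (hX n).probabilityMeasure) atTop (𝓝 μ))
    {y : Q} (hy : ∀ k : ℕ, y ∈ closure (⋃ l : ℕ, ⋃ (_ : k ≤ l), (X l : Set Q))) :
    y ∈ msupport (μ : Measure Q) := by
  intro U hU hyU
  obtain ⟨ε, hε, hεU⟩ := Metric.isOpen_iff.1 hU y hyU
  set δ := min (ε / 2) (1 / 2)
  have hδ : 0 < δ := by positivity
  obtain ⟨N, hN⟩ := eventually_atTop.1 (h δ hδ)
  obtain ⟨x, hx, hyx⟩ := Metric.mem_closure_iff.1 (hy N) δ hδ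
  obtain ⟨n, hNn, hxn⟩ := Set.mem_iUnion₂.1 hx
  have hball : (1 - δ) / (X n).card ≤ (μ : Measure Q).real (closedBall x δ) := by
    refine le_measureReal_of_tendsto_of_isClosed hμ isClosed_closedBall
      (((eventually_gt_atTop n).mono fun m hm ↦ ?_).frequently)
    have := isProbabilityMeasure_unifOrbit (hX m).nonempty
    exact ((hN n hNn m hm).div_card_le_measureReal_ball (hX m).nonempty hxn).trans
      (measureReal_mono ball_subset_closedBall)
  have hpos : 0 < (1 - δ) / (X n).card :=
    div_pos (by linarith [min_le_right (ε / 2) (1 / 2 : ℝ)]) (Nat.cast_pos.2 (hX n).1)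
  have hsub : closedBall x δ ⊆ U := (closedBall_subset_ball' (by
    rw [dist_comm] at hyx
    linarith [min_le_left (ε / 2) (1 / 2 : ℝ)])).trans hεU
  exact (ENNReal.toReal_pos_iff.1 (hpos.trans_le hball)).1.trans_le (measure_mono hsub)

theorem msupport_eq_of_tendsto (h : IsApproxCauchy G X) {hX : ∀ n, IsPeriodicOrbit G (X n)}
    {μ : ProbabilityMeasure Q} (hμ : Tendsto (fun n ↦ (hX n).probabilityMeasure) atTop (𝓝 μ)) :
    msupport (μ : Measure Q) = ⋂ k : ℕ, closure (⋃ l : ℕ, ⋃ (_ : k ≤ l), (X l : Set Q)) := by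
  refine Set.Subset.antisymm (Set.subset_iInter fun k ↦
    msupport_subset_closure_of_tendsto hμ ?_)
    fun y hy ↦ h.mem_msupport_of_tendsto hμ (Set.mem_iInter.1 hy)
  filter_upwards [eventually_ge_atTop k] with l hl
  filter_upwards [ae_mem_unifOrbit (X l)] with x hx
  exact Set.mem_iUnion₂.2 ⟨l, hl, hx⟩

end OpensMeasurableSpace

variable [BorelSpace Q]

theorem exists_tendsto [CompleteSpace Q] (h : IsApproxCauchy G X)
    (hX : ∀ n, IsPeriodicOrbit G (X n)) (hG : Measurable G) :
    ∃ μ : ProbabilityMeasure Q, Tendsto (fun n ↦ (hX n).probabilityMeasure) atTop (𝓝 μ) :=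
  exists_tendsto_of_isTightMeasureSet (h.isTightMeasureSet fun n ↦ (hX n).nonempty)
    fun _ _ hL ↦ h.cauchySeq_integral hX hG hL

theorem ergodic_of_tendsto (h : IsApproxCauchy G X) {hX : ∀ n, IsPeriodicOrbit G (X n)}
    (hG : Continuous G) {μ : ProbabilityMeasure Q}
    (hμ : Tendsto (fun n ↦ (hX n).probabilityMeasure) atTop (𝓝 μ)) :
    Ergodic G (μ : Measure Q) := by
  have hμG : MeasurePreserving G (μ : Measure Q) μ :=
    measurePreserving_of_tendsto (ν := fun n ↦ (hX n).probabilityMeasure) hG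
      (fun n ↦ (hX n).measurePreserving hG.measurable) hμ
  refine ergodic_of_forall_lipschitz_birkhoffAverage hμG fun f L hL ε hε ↦ ?_
  obtain ⟨n, hn⟩ :=
    (h.eventually_integral_abs_birkhoffAverage_sub_le hX hG.measurable hL hε).exists
  set c := ∫ x, f x ∂(unifOrbit (X n))
  refine ⟨(X n).card, (hX n).1.ne', c, ?_⟩
  obtain ⟨g, hg⟩ := exists_boundedContinuousFunction_eq_birkhoffAverage hG f (X n).card
  have hlim := ProbabilityMeasure.tendsto_iff_forall_integral_tendsto.1 hμ
    |g - BoundedContinuousFunction.const Q c|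
  have hcoe : ∀ x, |g - BoundedContinuousFunction.const Q c| x =
      |birkhoffAverage ℝ G f (X n).card x - c| := fun x ↦ by simp [← hg]
  simp only [hcoe] at hlim
  exact le_of_tendsto hlim ((eventually_gt_atTop n).mono hn)

end IsApproxCauchy

theorem stmt2_general {Q : Type*} [MetricSpace Q] [CompleteSpace Q]
    [MeasurableSpace Q] [BorelSpace Q] {G : Q → Q} (hG : Continuous G)
    {X : ℕ → Finset Q} (hX : ∀ n, IsPeriodicOrbit G (X n)) {γ κ : ℕ → ℝ} (hκ : ∀ n, 0 < κ n)
    (h : ∀ n, GoodApprox G (γ n) (κ n) (X (n + 1)) (X n)) (hγ : Summable γ)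
    (hprod : ∃ P : ℝ, 0 < P ∧
      Tendsto (fun n ↦ ∏ k ∈ Finset.range n, κ k) atTop (𝓝 P)) :
    ∃ μ : Measure Q, IsProbabilityMeasure μ ∧
      (∀ φ : Q →ᵇ ℝ,
        Tendsto (fun n ↦ ∫ y, φ y ∂(unifOrbit (X n))) atTop (𝓝 (∫ y, φ y ∂μ))) ∧
      Ergodic G μ ∧
      msupport μ = ⋂ k : ℕ, closure (⋃ l : ℕ, ⋃ (_ : k ≤ l), (X l : Set Q)) ∧
      msupport μ = {y : Q | ∃ (m : ℕ → ℕ) (x : ℕ → Q), Tendsto m atTop atTop ∧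
        (∀ i, x i ∈ X (m i)) ∧ Tendsto x atTop (𝓝 y)} := by
  obtain ⟨P, hP, hprod⟩ := hprod
  have hcauchy : IsApproxCauchy G X := isApproxCauchy_of_summable hκ h hγ hP hprod
  obtain ⟨μ, hμ⟩ := hcauchy.exists_tendsto hX hG.measurable
  have hsupp := hcauchy.msupport_eq_of_tendsto hμ
  exact ⟨μ, inferInstance, ProbabilityMeasure.tendsto_iff_forall_integral_tendsto.1 hμ,
    hcauchy.ergodic_of_tendsto hG hμ, hsupp,
    hsupp.trans (iInter_closure_iUnion_eq_setOf_tendsto fun n ↦ (X n : Set Q))⟩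

/-- Lemma 2.5: if each `X_{n+1}` is a `(γ_n, κ_n)`-good approximation of `X_n`,
`∑ γ_n < ∞` and `∏ κ_n > 0`, then the uniform measures `μ_n` on `X_n` converge in the
weak-* topology to an ergodic invariant measure `μ` whose support is the topological
limit of the sequence of orbits `X_n`. -/
theorem stmt2 {Q : Type*} [MetricSpace Q] [CompactSpace Q]
    [MeasurableSpace Q] [BorelSpace Q]
    (G : Q → Q) (hG : Continuous G)
    (X : ℕ → Finset Q) (hXper : ∀ n, IsPeriodicOrbit G (X n))
    (hXmono : StrictMono fun n => (X n).card)
    (γ : ℕ → ℝ) (hγ : ∀ n, 0 < γ n)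
    (κ : ℕ → ℝ) (hκ : ∀ n, κ n ∈ Set.Ioc (0 : ℝ) 1)
    (h1 : ∀ n, GoodApprox G (γ n) (κ n) (X (n + 1)) (X n))
    (h2 : Summable γ)
    (h3 : ∃ P : ℝ, 0 < P ∧
      Tendsto (fun n => ∏ k ∈ Finset.range n, κ k) atTop (𝓝 P)) :
    ∃ μ : Measure Q, IsProbabilityMeasure μ ∧
      (∀ φ : C(Q, ℝ),
        Tendsto (fun n => ∫ y, φ y ∂(unifOrbit (X n))) atTop (𝓝 (∫ y, φ y ∂μ))) ∧
      Ergodic G μ ∧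
      msupport μ = ⋂ k : ℕ, closure (⋃ l : ℕ, ⋃ (_ : k ≤ l), (X l : Set Q)) ∧
      msupport μ = {y : Q | ∃ (m : ℕ → ℕ) (x : ℕ → Q), Tendsto m atTop atTop ∧
        (∀ i, x i ∈ X (m i)) ∧ Tendsto x atTop (𝓝 y)} := by
  obtain ⟨μ, hμ, hlim, hμ_rest⟩ := stmt2_general hG hXper (fun n ↦ (hκ n).1) h1 h2 h3
  exact ⟨μ, hμ, fun φ ↦ hlim (.mkOfCompact φ), hμ_rest⟩
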